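/- There is a universal constant C > 0 such that the following holds. Let P ∈ M_m(ℂ) be an m × m complex projection matrix (P = P* = P²), let Q ∈ M_m(ℂ) be a diagonal projection, and let B ∈ M_m(ℂ) be a diagonal matrix satisfying 0 ≤ B ≤ Q (entrywise on the diagonal, equivalently in the positive semidefinite order). Assume that the diagonal entries of Q P Q are each at most ε. Then there is a diagonal projection Q' ≤ Q (i.e., Q' Q = Q') such that ‖P Q' P − P B P‖ ≤ C ε^{1/8}. -/

import Mathlib

open Matrix

/-- The diagonal projection matrix whose `i`-th diagonal entry is `1` exactly when `i ∈ S`. -/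
def diagProj {m : ℕ} (S : Finset (Fin m)) : Matrix (Fin m) (Fin m) ℂ :=
  Matrix.diagonal fun i => if i ∈ S then 1 else 0

/-- The operator norm of a matrix, acting on Euclidean space. -/
noncomputable def opNorm {m : ℕ} (A : Matrix (Fin m) (Fin m) ℂ) : ℝ :=
  ‖Matrix.toEuclideanCLM (𝕜 := ℂ) A‖

set_option linter.unusedSectionVars false

namespace KS

variable {σ : Type*} [Fintype σ] [DecidableEq σ]

/-- Discrete partial difference in the coordinate `k`. -/
def dd {K : Type*} [Ring K] (f : (σ → K) → K) (k : σ) (y : σ → K) : K :=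
  f (y + Pi.single k 1) - f y

/-- Affine in each variable separately. -/
def Aff {K : Type*} [Ring K] (f : (σ → K) → K) : Prop :=
  ∀ y k t, f (y + Pi.single k t) = f y + t * dd f k y

/-- Averaged shift. -/
def Lop {K : Type*} [Ring K] [Algebra ℝ K] (k l : σ) (β : ℝ) (f : (σ → K) → K) (y : σ → K) : K :=
  β • f (y + Pi.single k (-1)) + (1 - β) • f (y + Pi.single l (-1))

/-- A stable multi-affine function with real restriction `f`. -/
structure Good (p : (σ → ℂ) → ℂ) (f : (σ → ℝ) → ℝ) : Prop where
  cont : Continuous p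
  link : ∀ y : σ → ℝ, p (fun k => (y k : ℂ)) = (f y : ℂ)
  aff : Aff p
  stab : ∀ z : σ → ℂ, (∀ k, 0 < (z k).im) → p z ≠ 0
  evpos : ∃ N : ℝ, ∀ y : σ → ℝ, (∀ k, N ≤ y k) → 0 < f y

/-- Positive on the whole orthant above `y`. -/
def AR (f : (σ → ℝ) → ℝ) (y : σ → ℝ) : Prop := ∀ w, y ≤ w → 0 < f w

lemma cast_add_single (y : σ → ℝ) (k : σ) (t : ℝ) :
    (fun j => (((y + Pi.single k t : σ → ℝ) j : ℝ) : ℂ)) =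
      (fun j => (y j : ℂ)) + Pi.single k (t : ℂ) := by
  funext j
  by_cases h : j = k
  · subst h; simp
  · simp [h]

lemma Aff.diff {K : Type*} [CommRing K] {f : (σ → K) → K} (hf : Aff f) (k : σ) : Aff (dd f k) := by
  intro y j t
  have h1 := hf y j t
  have h2 := hf (y + Pi.single k 1) j t
  simp only [KS.dd] at *
  rw [add_right_comm, h2, h1, add_right_comm y (Pi.single j 1)]
  ring

lemma Good.affR {p : (σ → ℂ) → ℂ} {f : (σ → ℝ) → ℝ} (h : Good p f) : Aff f := by
  intro y k t
  have h1 := h.aff (fun k => (y k : ℂ)) k t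
  have h2 := h.link (y + Pi.single k t)
  have h3 := h.link (y + Pi.single k 1)
  rw [cast_add_single] at h2 h3
  simp only [dd] at *
  rw [h2, h.link] at h1
  rw [Complex.ofReal_one] at h3
  rw [h3] at h1
  exact_mod_cast h1

lemma Good.dlink {p : (σ → ℂ) → ℂ} {f : (σ → ℝ) → ℝ} (h : Good p f) (k : σ) (y : σ → ℝ) :
    dd p k (fun k => (y k : ℂ)) = ((dd f k y : ℝ) : ℂ) := by
  have h3 := h.link (y + Pi.single k 1)
  rw [cast_add_single, Complex.ofReal_one] at h3
  simp only [dd]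
  rw [h3, h.link]; push_cast; rfl

lemma Good.im_lt {p : (σ → ℂ) → ℂ} {f : (σ → ℝ) → ℝ} (h : Good p f) (k : σ) (z : σ → ℂ)
    (hz : ∀ k, 0 < (z k).im) (hc : dd p k z ≠ 0) :
    (dd p k z * (starRingEnd ℂ) (p z)).im < 0 := by
  set c := dd p k z with hcdef
  set a := p z with ha
  have h1 : p (z + Pi.single k (-a / c)) = 0 := by
    rw [h.aff, ← hcdef, ← ha]; field_simp; ring
  have h2 : ¬ ∀ j, 0 < ((z + Pi.single k (-a / c) : σ → ℂ) j).im := fun hh => h.stab _ hh h1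
  have h3 : (z k).im + (-a / c).im ≤ 0 := by
    by_contra hcon
    push Not at hcon
    apply h2
    intro j
    by_cases hj : j = k
    · subst hj; simpa using hcon
    · simpa [hj] using hz j
  have h4 : (-a / c).im < 0 := by linarith [hz k]
  have hn : 0 < Complex.normSq c := Complex.normSq_pos.mpr hc
  rw [Complex.div_im] at h4
  have h5 : ((-a).im * c.re - (-a).re * c.im) / Complex.normSq c < 0 := by
    rw [sub_div]; exact h4
  rw [div_neg_iff] at h5
  simp only [Complex.mul_im, Complex.conj_re, Complex.conj_im, Complex.neg_im, Complex.neg_re] at *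
  rcases h5 with h5 | h5
  · linarith [h5.2]
  · linarith [h5.1]

lemma Good.im_le {p : (σ → ℂ) → ℂ} {f : (σ → ℝ) → ℝ} (h : Good p f) (k : σ) (z : σ → ℂ)
    (hz : ∀ k, 0 < (z k).im) :
    (dd p k z * (starRingEnd ℂ) (p z)).im ≤ 0 := by
  by_cases hc : dd p k z = 0
  · simp [hc]
  · exact (h.im_lt k z hz hc).le

lemma Good.im_le' {p : (σ → ℂ) → ℂ} {f : (σ → ℝ) → ℝ} (h : Good p f) (k : σ) (z : σ → ℂ)
    (hz : ∀ k, 0 ≤ (z k).im) :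
    (dd p k z * (starRingEnd ℂ) (p z)).im ≤ 0 := by
  have hp := h.cont
  have hcont : Continuous (fun η : ℝ =>
      (dd p k (z + fun _ => (η : ℂ) * Complex.I) *
        (starRingEnd ℂ) (p (z + fun _ => (η : ℂ) * Complex.I))).im) := by
    unfold dd
    fun_prop
  have h0 := (hcont.tendsto 0).mono_left (nhdsWithin_le_nhds (s := Set.Ioi 0))
  have hz0 : (z + fun _ => ((0 : ℝ) : ℂ) * Complex.I) = z := by funext j; simp
  rw [hz0] at h0
  refine le_of_tendsto h0 ?_
  filter_upwards [self_mem_nhdsWithin] with η hη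
  apply h.im_le
  intro j
  have := hz j
  simp only [Set.mem_Ioi] at hη
  simp; linarith

lemma Good.rayleigh {p : (σ → ℂ) → ℂ} {f : (σ → ℝ) → ℝ} (h : Good p f) (j k : σ) (y : σ → ℝ) :
    f y * dd (dd f k) j y ≤ dd f j y * dd f k y := by
  have h1 := h.im_le' k ((fun k => (y k : ℂ)) + Pi.single j Complex.I) (by
    intro l
    by_cases hl : l = j
    · subst hl; simp
    · simp [hl])
  have h2 : dd (dd p k) j (fun k => (y k : ℂ)) = ((dd (dd f k) j y : ℝ) : ℂ) := by
    have h3 := h.dlink k (y + Pi.single j 1)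
    rw [cast_add_single, Complex.ofReal_one] at h3
    have h4 := h.dlink k y
    rw [dd, h3, h4, ← Complex.ofReal_sub]; rfl
  rw [h.aff, h.aff.diff k, h.link, h.dlink, h.dlink, h2] at h1
  simp at h1
  linarith

lemma Lop_eq {K : Type*} [CommRing K] [Algebra ℝ K] {f : (σ → K) → K} (hf : Aff f) (k l : σ)
    (β : ℝ) (y : σ → K) :
    Lop k l β f y = f y - (β • dd f k y + (1 - β) • dd f l y) := by
  rw [Lop, hf, hf]
  simp only [smul_add, neg_mul, one_mul, smul_neg, sub_smul, one_smul]
  ring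

lemma Lop_comm {K : Type*} [CommRing K] [Algebra ℝ K] (f : (σ → K) → K) (k l k' l' : σ)
    (β β' : ℝ) : Lop k l β (Lop k' l' β' f) = Lop k' l' β' (Lop k l β f) := by
  funext y
  simp only [Lop, smul_add]
  rw [add_right_comm y (Pi.single k (-1)), add_right_comm y (Pi.single k (-1)),
    add_right_comm y (Pi.single l (-1)), add_right_comm y (Pi.single l (-1))]
  simp only [smul_comm β' β, smul_comm (1-β') β, smul_comm β' (1 - β), smul_comm (1-β') (1-β)]
  abel

lemma Good.Lop {p : (σ → ℂ) → ℂ} {f : (σ → ℝ) → ℝ} (h : Good p f) (k l : σ) (β : ℝ)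
    (h0 : 0 ≤ β) (h1 : β ≤ 1) : Good (Lop k l β p) (Lop k l β f) where
  cont := by
    have := h.cont
    unfold KS.Lop
    fun_prop
  link := by
    intro y
    have h2 := h.link (y + Pi.single k (-1))
    have h3 := h.link (y + Pi.single l (-1))
    rw [cast_add_single] at h2 h3
    push_cast at h2 h3
    simp only [KS.Lop]
    rw [h2, h3]
    simp
  aff := by
    intro y j t
    have e1 := h.aff (y + Pi.single k (-1)) j t
    have e2 := h.aff (y + Pi.single l (-1)) j t
    simp only [KS.Lop, dd] at *
    rw [add_right_comm y, e1, add_right_comm y _ (Pi.single l (-1)), e2,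
      add_right_comm y (Pi.single j 1), add_right_comm y (Pi.single j 1)]
    simp only [Complex.real_smul]
    ring
  stab := by
    intro z hz hL
    rw [Lop_eq h.aff] at hL
    have ha : p z ≠ 0 := h.stab z hz
    have i1 := h.im_le k z hz
    have i2 := h.im_le l z hz
    have hmul : p z * (starRingEnd ℂ) (p z) =
        (β : ℂ) * (dd p k z * (starRingEnd ℂ) (p z)) +
          ((1 - β : ℝ) : ℂ) * (dd p l z * (starRingEnd ℂ) (p z)) := by
      rw [sub_eq_zero] at hL
      nth_rewrite 1 [hL]
      simp only [Complex.real_smul]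
      ring
    have him := congrArg Complex.im hmul
    rw [Complex.mul_conj, Complex.ofReal_im, Complex.add_im, Complex.im_ofReal_mul,
      Complex.im_ofReal_mul] at him
    have g1 : β * (dd p k z * (starRingEnd ℂ) (p z)).im ≤ 0 := mul_nonpos_of_nonneg_of_nonpos h0 i1
    have g2 : (1 - β) * (dd p l z * (starRingEnd ℂ) (p z)).im ≤ 0 :=
      mul_nonpos_of_nonneg_of_nonpos (by linarith) i2
    have k1 : (β : ℂ) * dd p k z = 0 := by
      by_contra hne
      have hc : dd p k z ≠ 0 := right_ne_zero_of_mul hne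
      have hb : β ≠ 0 := by
        intro hb; apply hne; simp [hb]
      have := mul_neg_of_pos_of_neg (lt_of_le_of_ne h0 (Ne.symm hb)) (h.im_lt k z hz hc)
      linarith
    have k2 : ((1 - β : ℝ) : ℂ) * dd p l z = 0 := by
      by_contra hne
      have hc : dd p l z ≠ 0 := right_ne_zero_of_mul hne
      have hb : 1 - β ≠ 0 := by
        intro hb; apply hne; rw [hb]; simp
      have := mul_neg_of_pos_of_neg (lt_of_le_of_ne (by linarith : 0 ≤ 1 - β) (Ne.symm hb))
        (h.im_lt l z hz hc)
      linarith
    simp only [Complex.real_smul, k1, k2] at hL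
    apply ha
    simpa using hL
  evpos := by
    obtain ⟨N, hN⟩ := h.evpos
    refine ⟨N + 1, fun y hy => ?_⟩
    have key : ∀ k, 0 < f (y + Pi.single k (-1)) := by
      intro k
      apply hN
      intro j
      have := hy j
      by_cases hj : j = k
      · subst hj; simp; linarith
      · simp [hj]; linarith
    simp only [KS.Lop, smul_eq_mul]
    have a1 := key k
    have a2 := key l
    rcases eq_or_lt_of_le h0 with hb | hb
    · rw [← hb]; simpa using a2
    · have := mul_pos hb a1
      have := mul_nonneg (by linarith : 0 ≤ 1 - β) a2.le
      linarith

lemma mono_of_coord {α : Type*} [Preorder α] (F : (σ → ℝ) → α) (y : σ → ℝ)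
    (hF : ∀ w j t, y ≤ w → 0 ≤ t → F (w + Pi.single j t) ≤ F w)
    (w w' : σ → ℝ) (hw : y ≤ w) (hw' : w ≤ w') : F w' ≤ F w := by
  have key : ∀ s : Finset σ, w ≤ w + ∑ k ∈ s, Pi.single k (w' k - w k) ∧
      F (w + ∑ k ∈ s, Pi.single k (w' k - w k)) ≤ F w := by
    intro s
    induction s using Finset.induction_on with
    | empty => simp
    | insert a s ha ih =>
      rw [Finset.sum_insert ha, add_comm (Pi.single a _), ← add_assoc]
      have hn : 0 ≤ w' a - w a := sub_nonneg.mpr (hw' a)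
      refine ⟨ih.1.trans ?_, (hF _ _ _ (hw.trans ih.1) hn).trans ih.2⟩
      rw [le_add_iff_nonneg_right]
      exact Pi.single_nonneg.mpr hn
  have := (key Finset.univ).2
  have e : w + ∑ k, Pi.single k (w' k - w k) = w' := by
    rw [Finset.univ_sum_single (fun k => w' k - w k)]
    funext j; simp
  rwa [e] at this

lemma le_add_single (w : σ → ℝ) (k : σ) {t : ℝ} (ht : 0 ≤ t) : w ≤ w + Pi.single k t := by
  rw [le_add_iff_nonneg_right]
  exact Pi.single_nonneg.mpr ht

lemma AR.dd_nonneg {f : (σ → ℝ) → ℝ} (hf : Aff f) {y : σ → ℝ} (h : AR f y) (k : σ) (w : σ → ℝ)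
    (hw : y ≤ w) : 0 ≤ dd f k w := by
  by_contra hneg
  push Not at hneg
  have h1 := h w hw
  have h2 : 0 ≤ f w / (- dd f k w) := div_nonneg h1.le (by linarith)
  have h3 := h _ (hw.trans (le_add_single w k h2))
  rw [hf] at h3
  have : f w / (- dd f k w) * dd f k w = - f w := by
    rw [div_mul_eq_mul_div, div_eq_iff (by linarith)]; ring
  linarith

lemma AR.mono {p : (σ → ℂ) → ℂ} {f : (σ → ℝ) → ℝ} (h : Good p f) {y : σ → ℝ} (har : AR f y)
    (k : σ) (w w' : σ → ℝ) (hw : y ≤ w) (hw' : w ≤ w') :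
    dd f k w' / f w' ≤ dd f k w / f w := by
  refine mono_of_coord (fun w => dd f k w / f w) y ?_ w w' hw hw'
  intro w j t hw ht
  have p1 := har w hw
  have p2 := har _ (hw.trans (le_add_single w j ht))
  show dd f k (w + Pi.single j t) / f (w + Pi.single j t) ≤ dd f k w / f w
  rw [div_le_div_iff₀ p2 p1, h.affR, h.affR.diff k]
  have := h.rayleigh j k w
  nlinarith

lemma AR.of_le {f : (σ → ℝ) → ℝ} {y w : σ → ℝ} (h : AR f y) (hw : y ≤ w) : AR f w :=
  fun v hv => h v (hw.trans hv)

/-- If the averaged function is positive above `y`, so is the original one. -/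
lemma AR.of_Lop {p : (σ → ℂ) → ℂ} {f : (σ → ℝ) → ℝ} (h : Good p f) {y : σ → ℝ} {k l : σ}
    {β : ℝ} (h0 : 0 ≤ β) (h1 : β ≤ 1) (har : AR (Lop k l β f) y) : AR f y := by
  intro w hw
  obtain ⟨N, hN⟩ := h.evpos
  have hmono := mono_of_coord (α := Prop) (fun w => 0 < f w) y (by
    intro w j t hw ht hpos
    by_contra hneg
    push Not at hneg
    rw [h.affR] at hpos
    have hB : 0 < dd f j w := by
      by_contra hB
      push Not at hB
      nlinarith
    set s := - f w / dd f j w with hs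
    have hs0 : 0 ≤ s := div_nonneg (by linarith) hB.le
    have hle := hw.trans (le_add_single w j hs0)
    have hz : f (w + Pi.single j s) = 0 := by
      rw [h.affR, hs]; field_simp; ring
    have hBs : dd f j (w + Pi.single j s) = dd f j w := by
      have e1 := h.affR w j (s + 1)
      have e2 := h.affR w j s
      have e3 : w + Pi.single j s + Pi.single j 1 = w + Pi.single j (s + 1) := by
        rw [add_assoc, ← Pi.single_add]
      rw [dd, e3, e1, e2]; ring
    have hq : ∀ k, 0 ≤ dd f k (w + Pi.single j s) := by
      intro k
      have := h.rayleigh j k (w + Pi.single j s)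
      rw [hz, zero_mul, hBs] at this
      by_contra hcon
      push Not at hcon
      nlinarith
    have := har _ hle
    rw [Lop_eq h.affR, hz] at this
    simp only [smul_eq_mul] at this
    have a1 := mul_nonneg h0 (hq k)
    have a2 := mul_nonneg (by linarith : 0 ≤ 1 - β) (hq l)
    linarith) w (fun j => max N (w j)) hw (fun j => le_max_right _ _)
  exact hmono (hN _ (fun j => le_max_left _ _))

lemma AR.choose {p : (σ → ℂ) → ℂ} {f : (σ → ℝ) → ℝ} (h : Good p f) {y : σ → ℝ} {k l : σ}
    {β : ℝ} (h0 : 0 ≤ β) (h1 : β ≤ 1) (har : AR (Lop k l β f) y) :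
    AR (Lop k l 1 f) y ∨ AR (Lop k l 0 f) y := by
  have hf := har.of_Lop h h0 h1
  have hy := har y le_rfl
  have hfy := hf y le_rfl
  rw [Lop_eq h.affR] at hy
  simp only [smul_eq_mul] at hy
  have aux : ∀ k, dd f k y < f y → ∀ w, y ≤ w → dd f k w < f w := by
    intro k hk w hw
    have := hf.mono h k y w le_rfl hw
    have h2 : dd f k y / f y < 1 := (div_lt_one hfy).mpr hk
    exact (div_lt_one (hf w hw)).mp (this.trans_lt h2)
  by_cases hk : dd f k y < f y
  · left
    intro w hw
    rw [Lop_eq h.affR]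
    have := aux k hk w hw
    simp; linarith
  · right
    have hl : dd f l y < f y := by
      by_contra hl
      push Not at hk hl
      nlinarith
    intro w hw
    rw [Lop_eq h.affR]
    have := aux l hl w hw
    simp; linarith

lemma convex_alg (A B C A' B' C' θ : ℝ) (hA : 0 < A) (hB : 0 ≤ B) (hC : 0 ≤ C)  (hθ : 0 < θ)
    (hW : ∀ t : ℝ, (A + B * t + C * t ^ 2) * (B' + 2 * C' * t) ≤
      (B + 2 * C * t) * (A' + B' * t + C' * t ^ 2)) :
    (A' + B' * θ + C' * θ ^ 2) * (A + B * θ + C * θ ^ 2) * A -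
      θ * ((A + B * θ + C * θ ^ 2) * (B' + 2 * C' * θ) -
      (B + 2 * C * θ) * (A' + B' * θ + C' * θ ^ 2)) * A ≤ A' * (A + B * θ + C * θ ^ 2) ^ 2 := by
  set W0 := A * B' - A' * B with hW0
  set W1 := A * C' - A' * C with hW1
  set W2 := B * C' - B' * C with hW2
  have hQ : ∀ t : ℝ, W2 * (t * t) + (2 * W1) * t + W0 ≤ 0 := by
    intro t
    have := hW t
    nlinarith
  have h0 : W0 ≤ 0 := by simpa using hQ 0
  have hD := discrim_le_zero_of_nonpos hQ
  unfold discrim at hD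
  have hD' : W1 ^ 2 ≤ W0 * W2 := by nlinarith
  have hpl : A * W2 = B * W1 - C * W0 := by rw [hW0, hW1, hW2]; ring
  have h3 : A * W1 ^ 2 ≤ B * (W0 * W1) - C * W0 ^ 2 := by
    have := mul_le_mul_of_nonneg_left hD' hA.le
    nlinarith
  have hmain : 0 ≤ (A * W1 - B * W0) - 2 * C * W0 * θ - θ ^ 2 * (C * W1) := by
    have c2 : 0 ≤ - (C * W0 * θ) := by
      have := mul_nonneg (mul_nonneg hC (neg_nonneg.mpr h0)) hθ.le
      linarith
    rcases lt_trichotomy W1 0 with h | h | h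
    · have c1 : 0 ≤ A * W1 - B * W0 := by
        by_contra hcon
        push Not at hcon
        nlinarith [mul_nonneg hC (sq_nonneg W0), mul_pos_of_neg_of_neg h hcon]
      have c3 : 0 ≤ - (C * W1) := by nlinarith
      nlinarith [mul_nonneg (sq_nonneg θ) c3]
    · rw [h]
      have := mul_nonneg hB (neg_nonneg.mpr h0)
      nlinarith
    · -- then everything degenerates
      have h5 : B * (W0 * W1) ≤ 0 := by
        have := mul_nonneg hB (mul_nonneg (neg_nonneg.mpr h0) h.le)
        linarith
      have h6 : 0 < A * W1 ^ 2 := by positivity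
      nlinarith [mul_nonneg hC (sq_nonneg W0)]
  have hfin : A' * (A + B * θ + C * θ ^ 2) ^ 2 -
    ((A' + B' * θ + C' * θ ^ 2) * (A + B * θ + C * θ ^ 2) * A -
      θ * ((A + B * θ + C * θ ^ 2) * (B' + 2 * C' * θ) -
      (B + 2 * C * θ) * (A' + B' * θ + C' * θ ^ 2)) * A) =
      θ ^ 2 * ((A * W1 - B * W0) - 2 * C * W0 * θ - θ ^ 2 * (C * W1)) := by
    rw [hW0, hW1]; ring
  have := mul_nonneg (sq_nonneg θ) hmain
  linarith

lemma dd_comm {K : Type*} [CommRing K] (f : (σ → K) → K) (j k : σ) (y : σ → K) :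
    dd (dd f j) k y = dd (dd f k) j y := by
  simp only [dd]
  rw [add_right_comm y (Pi.single k 1)]
  ring

lemma Aff.two {h : (σ → ℝ) → ℝ} (hh : Aff h) (y : σ → ℝ) (i j : σ) (s t : ℝ) :
    h (y + Pi.single i s + Pi.single j t) =
      h y + s * dd h i y + t * dd h j y + s * t * dd (dd h j) i y := by
  rw [hh, hh, hh.diff j]; ring

lemma Aff.dtwo1 {h : (σ → ℝ) → ℝ} (hh : Aff h) (y : σ → ℝ) (i j : σ) (s t : ℝ) :
    dd h i (y + Pi.single i s + Pi.single j t) = dd h i y + t * dd (dd h j) i y := by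
  have e : y + Pi.single i s + Pi.single j t + Pi.single i 1 =
      y + Pi.single i (s + 1) + Pi.single j t := by
    rw [Pi.single_add]; abel
  rw [dd, e, hh.two, hh.two]; ring

lemma Aff.dtwo2 {h : (σ → ℝ) → ℝ} (hh : Aff h) (y : σ → ℝ) (i j : σ) (s t : ℝ) :
    dd h j (y + Pi.single i s + Pi.single j t) = dd h j y + s * dd (dd h j) i y := by
  have e : y + Pi.single i s + Pi.single j t + Pi.single j 1 =
      y + Pi.single i s + Pi.single j (t + 1) := by
    rw [Pi.single_add]; abel
  rw [dd, e, hh.two, hh.two]; ring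

/-- One step of the barrier argument. -/
lemma barrier_step {p : (σ → ℂ) → ℂ} {f : (σ → ℝ) → ℝ} (h : Good p f) {y : σ → ℝ} (har : AR f y)
    (i j : σ) {β θ : ℝ} (h0 : 0 ≤ β) (h1 : β ≤ 1) (hθ : 0 < θ)
    (hΨ : β * (dd f i y / f y) + (1 - β) * (dd f j y / f y) ≤ 1 - 1 / θ) :
    AR (Lop i j β f) (y + (Pi.single i (θ * β) + Pi.single j (θ * (1 - β)))) ∧
    ∀ k, dd (Lop i j β f) k (y + (Pi.single i (θ * β) + Pi.single j (θ * (1 - β)))) /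
        Lop i j β f (y + (Pi.single i (θ * β) + Pi.single j (θ * (1 - β)))) ≤ dd f k y / f y := by
  have hb1 : 0 ≤ 1 - β := by linarith
  have hle : y ≤ y + (Pi.single i (θ * β) + Pi.single j (θ * (1 - β))) := by
    rw [← add_assoc]
    exact (le_add_single y i (by positivity)).trans (le_add_single _ j (by positivity))
  have hB : ∀ w, y ≤ w → f w ≤ θ * (f w - (β * dd f i w + (1 - β) * dd f j w)) := by
    intro w hw
    have m1 := mul_le_mul_of_nonneg_left (har.mono h i y w le_rfl hw) h0
    have m2 := mul_le_mul_of_nonneg_left (har.mono h j y w le_rfl hw) hb1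
    have hfw := har w hw
    have m3 : (β * dd f i w + (1 - β) * dd f j w) / f w ≤ 1 - 1 / θ := by
      rw [add_div, mul_div_assoc, mul_div_assoc]; linarith
    rw [div_le_iff₀ hfw] at m3
    have m4 := mul_le_mul_of_nonneg_left m3 hθ.le
    have m5 : θ * ((1 - 1 / θ) * f w) = θ * f w - f w := by field_simp
    rw [m5] at m4
    nlinarith
  have hpos : ∀ w, y ≤ w → 0 < f w - (β * dd f i w + (1 - β) * dd f j w) := by
    intro w hw
    have := hB w hw
    have hfw := har w hw
    by_contra hcon
    push Not at hcon
    nlinarith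
  have hAR : AR (Lop i j β f) (y + (Pi.single i (θ * β) + Pi.single j (θ * (1 - β)))) := by
    intro w hw
    rw [Lop_eq h.affR]
    simpa only [smul_eq_mul] using hpos w (hle.trans hw)
  refine ⟨hAR, fun k => ?_⟩
  have hA := har y le_rfl
  rw [div_le_div_iff₀ (hAR _ le_rfl) hA]
  have hddL : ∀ w, dd (Lop i j β f) k w =
      dd f k w - (β * dd (dd f k) i w + (1 - β) * dd (dd f k) j w) := by
    intro w
    rw [← dd_comm f i k, ← dd_comm f j k]
    rw [dd, Lop_eq h.affR, Lop_eq h.affR]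
    simp only [dd, smul_eq_mul]
    ring
  rw [hddL, Lop_eq h.affR]
  simp only [smul_eq_mul]
  set y' := y + (Pi.single i (θ * β) + Pi.single j (θ * (1 - β))) with hy'
  have haf := h.affR
  have hq := haf.diff k
  have hd12 : 0 ≤ dd (dd f j) i y := by
    by_contra hneg
    push Not at hneg
    have g1 := har.dd_nonneg haf j y le_rfl
    have hs : 0 ≤ (dd f j y + 1) / (-dd (dd f j) i y) := div_nonneg (by linarith) (by linarith)
    have g2 := har.dd_nonneg haf j _ (le_add_single y i hs)
    rw [(haf.diff j)] at g2
    have : (dd f j y + 1) / (-dd (dd f j) i y) * dd (dd f j) i y = - (dd f j y + 1) := by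
      rw [div_mul_eq_mul_div, div_eq_iff (by linarith)]; ring
    linarith
  have hW : ∀ t : ℝ, (f y + (β * dd f i y + (1 - β) * dd f j y) * t +
        (β * (1 - β) * dd (dd f j) i y) * t ^ 2) *
        ((β * dd (dd f k) i y + (1 - β) * dd (dd f k) j y) +
          2 * (β * (1 - β) * dd (dd (dd f k) j) i y) * t) ≤
      ((β * dd f i y + (1 - β) * dd f j y) + 2 * (β * (1 - β) * dd (dd f j) i y) * t) *
        (dd f k y + (β * dd (dd f k) i y + (1 - β) * dd (dd f k) j y) * t +
        (β * (1 - β) * dd (dd (dd f k) j) i y) * t ^ 2) := by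
    intro t
    have r1 := h.rayleigh i k (y + Pi.single i (t * β) + Pi.single j (t * (1 - β)))
    have r2 := h.rayleigh j k (y + Pi.single i (t * β) + Pi.single j (t * (1 - β)))
    rw [haf.two, haf.dtwo1, hq.two, hq.dtwo1] at r1
    rw [haf.two, haf.dtwo2, hq.two, hq.dtwo2] at r2
    have r1' := mul_le_mul_of_nonneg_left r1 h0
    have r2' := mul_le_mul_of_nonneg_left r2 hb1
    calc _ = _ := ?_
      _ ≤ _ := add_le_add r1' r2'
      _ = _ := ?_
    · ring
    · ring
  have hconv := convex_alg _ _ _ _ _ _ θ hA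
    (add_nonneg (mul_nonneg h0 (har.dd_nonneg haf i y le_rfl))
      (mul_nonneg hb1 (har.dd_nonneg haf j y le_rfl)))
    (mul_nonneg (mul_nonneg h0 hb1) hd12) hθ hW
  have hWθ := hW θ
  -- values at the shifted point
  have e0 : y' = y + Pi.single i (θ * β) + Pi.single j (θ * (1 - β)) := by rw [hy', add_assoc]
  have eP : f y' = f y + (β * dd f i y + (1 - β) * dd f j y) * θ +
        (β * (1 - β) * dd (dd f j) i y) * θ ^ 2 := by
    rw [e0, haf.two]; ring
  have eB : β * dd f i y' + (1 - β) * dd f j y' = (β * dd f i y + (1 - β) * dd f j y) +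
      2 * (β * (1 - β) * dd (dd f j) i y) * θ := by
    rw [e0, haf.dtwo1, haf.dtwo2]; ring
  have eq1 : dd f k y' = dd f k y + (β * dd (dd f k) i y + (1 - β) * dd (dd f k) j y) * θ +
        (β * (1 - β) * dd (dd (dd f k) j) i y) * θ ^ 2 := by
    rw [e0, hq.two]; ring
  have eD : β * dd (dd f k) i y' + (1 - β) * dd (dd f k) j y' =
      (β * dd (dd f k) i y + (1 - β) * dd (dd f k) j y) +
          2 * (β * (1 - β) * dd (dd (dd f k) j) i y) * θ := by
    rw [e0, hq.dtwo1, hq.dtwo2]; ring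
  rw [← eP, ← eB, ← eq1, ← eD] at hconv hWθ
  have p1 := hpos y' hle
  have p2 := hB y' hle
  have p3 := har y' hle
  generalize β * dd f i y' + (1 - β) * dd f j y' = B1 at *
  generalize β * dd (dd f k) i y' + (1 - β) * dd (dd f k) j y' = D1 at *
  generalize dd f k y' = q1 at *
  generalize f y' = P1 at *
  generalize dd f k y = A' at *
  generalize f y = A at *
  have s1 := mul_le_mul_of_nonneg_right hconv p1.le
  have s2 : 0 ≤ (B1 * q1 - P1 * D1) * A * (θ * (P1 - B1) - P1) :=
    mul_nonneg (mul_nonneg (by linarith) hA.le) (by linarith)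
  have s3 : P1 ^ 2 * ((q1 - D1) * A) ≤ P1 ^ 2 * (A' * (P1 - B1)) := by
    nlinarith
  exact le_of_mul_le_mul_left s3 (by positivity)

section lists

variable {ι : Type*} [Fintype ι] [DecidableEq ι]

/-- Iterated averaged shifts. -/
def LL {K : Type*} [Ring K] [Algebra ℝ K] (b : ι → ℝ) :
    List ι → ((ι × Bool → K) → K) → ((ι × Bool → K) → K)
  | [], f => f
  | i :: l, f => LL b l (Lop (i, true) (i, false) (b i) f)

/-- The direction attached to the index `i`. -/
def sh (b : ι → ℝ) (i : ι) : ι × Bool → ℝ :=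
  Pi.single (i, true) (b i) + Pi.single (i, false) (1 - b i)

lemma barrier_list (b : ι → ℝ) (hb0 : ∀ i, 0 ≤ b i) (hb1 : ∀ i, b i ≤ 1) {θ : ℝ} (hθ : 0 < θ)
    (l : List ι) : ∀ (p : (ι × Bool → ℂ) → ℂ) (f : (ι × Bool → ℝ) → ℝ) (y : ι × Bool → ℝ),
    Good p f → AR f y →
    (∀ i ∈ l, b i * (dd f (i, true) y / f y) + (1 - b i) * (dd f (i, false) y / f y)
      ≤ 1 - 1 / θ) →
    AR (LL b l f) (y + θ • (l.map (sh b)).sum) := by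
  induction l with
  | nil => intro p f y _ har _; simpa [LL] using har
  | cons i l ih =>
    intro p f y hg har hΨ
    have hst := barrier_step hg har (i, true) (i, false) (hb0 i) (hb1 i) hθ
      (hΨ i (by simp))
    have := ih _ _ _ (hg.Lop (i, true) (i, false) (b i) (hb0 i) (hb1 i)) hst.1 (by
      intro j hj
      refine le_trans ?_ (hΨ j (by simp [hj]))
      exact add_le_add (mul_le_mul_of_nonneg_left (hst.2 _) (hb0 j))
        (mul_le_mul_of_nonneg_left (hst.2 _) (by linarith [hb1 j])))
    rw [LL]
    convert this using 1
    rw [List.map_cons, List.sum_cons, smul_add, add_assoc]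
    congr 2
    rw [sh, smul_add, ← Pi.single_smul, ← Pi.single_smul]
    simp

lemma LL_Lop {K : Type*} [CommRing K] [Algebra ℝ K] (b : ι → ℝ) (k k' : ι × Bool) (β : ℝ)
    (l : List ι) : ∀ f : (ι × Bool → K) → K,
    LL b l (Lop k k' β f) = Lop k k' β (LL b l f) := by
  induction l with
  | nil => intro f; rfl
  | cons i l ih => intro f; rw [LL, LL, Lop_comm, ih]

lemma LL_congr {K : Type*} [CommRing K] [Algebra ℝ K] (b b' : ι → ℝ)
    (l : List ι) : ∀ f : (ι × Bool → K) → K, (∀ i ∈ l, b i = b' i) → LL b l f = LL b' l f := by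
  induction l with
  | nil => intro f _; rfl
  | cons i l ih =>
    intro f h
    rw [LL, LL, h i (by simp), ih _ (fun j hj => h j (by simp [hj]))]

lemma Good.LL (b : ι → ℝ) (hb0 : ∀ i, 0 ≤ b i) (hb1 : ∀ i, b i ≤ 1) (l : List ι) :
    ∀ (p : (ι × Bool → ℂ) → ℂ) (f : (ι × Bool → ℝ) → ℝ), Good p f →
      Good (LL b l p) (LL b l f) := by
  induction l with
  | nil => intro p f h; exact h
  | cons i l ih => intro p f h; exact ih _ _ (h.Lop _ _ _ (hb0 i) (hb1 i))

lemma choose_list (b : ι → ℝ) (hb0 : ∀ i, 0 ≤ b i) (hb1 : ∀ i, b i ≤ 1) (y : ι × Bool → ℝ)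
    (l : List ι) (hl : l.Nodup) :
    ∀ (p : (ι × Bool → ℂ) → ℂ) (f : (ι × Bool → ℝ) → ℝ), Good p f → AR (LL b l f) y →
      ∃ b' : ι → ℝ, (∀ i, b' i = 0 ∨ b' i = 1) ∧ AR (LL b' l f) y := by
  induction l with
  | nil => intro p f _ h; exact ⟨fun _ => 0, fun _ => Or.inl rfl, h⟩
  | cons i l ih =>
    intro p f hg h
    rw [List.nodup_cons] at hl
    obtain ⟨b', hb', har⟩ := ih hl.2 _ _ (hg.Lop (i, true) (i, false) _ (hb0 i) (hb1 i)) h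
    rw [LL_Lop] at har
    have hgood := Good.LL b' (fun i => by rcases hb' i with h | h <;> simp [h])
      (fun i => by rcases hb' i with h | h <;> simp [h]) l p f hg
    have key : ∀ v : ℝ, v = 0 ∨ v = 1 → AR (Lop (i, true) (i, false) v (LL b' l f)) y →
        ∃ b' : ι → ℝ, (∀ i, b' i = 0 ∨ b' i = 1) ∧ AR (LL b' (i :: l) f) y := by
      intro v hv hAR
      refine ⟨Function.update b' i v, ?_, ?_⟩
      · intro j
        by_cases hj : j = i
        · subst hj; simpa using hv
        · simpa [hj] using hb' j
      · rw [LL, LL_congr _ b', LL_Lop]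
        · simpa using hAR
        · intro j hj
          have : j ≠ i := fun e => hl.1 (e ▸ hj)
          simp [this]
    rcases har.choose hgood (hb0 i) (hb1 i) with h | h
    · exact key 1 (Or.inr rfl) h
    · exact key 0 (Or.inl rfl) h

lemma LL_eval (b : ι → ℝ) (hb : ∀ i, b i = 0 ∨ b i = 1) (l : List ι) :
    ∀ (f : (ι × Bool → ℝ) → ℝ) (w : ι × Bool → ℝ),
      LL b l f w = f (w - (l.map (sh b)).sum) := by
  induction l with
  | nil => intro f w; simp [LL]
  | cons i l ih =>
    intro f w
    rw [LL, ih, List.map_cons, List.sum_cons]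
    have e : w - (sh b i + (l.map (sh b)).sum) = w - (l.map (sh b)).sum + - sh b i := by abel
    rw [e, Lop, sh]
    rcases hb i with h | h <;> simp [h, Pi.single_neg]

end lists

/-- The abstract conclusion of the interlacing/barrier argument. -/
theorem abstract_main {ι : Type*} [Fintype ι] [DecidableEq ι]
    (b : ι → ℝ) (hb0 : ∀ i, 0 ≤ b i) (hb1 : ∀ i, b i ≤ 1) {θ : ℝ} (hθ : 0 < θ)
    (S : Finset ι) (p : (ι × Bool → ℂ) → ℂ) (f : (ι × Bool → ℝ) → ℝ) (hg : Good p f)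
    (har : AR f (-(θ • ∑ i ∈ S, sh b i)))
    (hΨ : ∀ i ∈ S, b i * (dd f (i, true) (-(θ • ∑ i ∈ S, sh b i)) / f (-(θ • ∑ i ∈ S, sh b i)))
      + (1 - b i) * (dd f (i, false) (-(θ • ∑ i ∈ S, sh b i)) / f (-(θ • ∑ i ∈ S, sh b i)))
      ≤ 1 - 1 / θ) :
    ∃ b' : ι → ℝ, (∀ i, b' i = 0 ∨ b' i = 1) ∧ AR f (-(∑ i ∈ S, sh b' i)) := by
  have hsum : ∀ b : ι → ℝ, (S.toList.map (sh b)).sum = ∑ i ∈ S, sh b i := by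
    intro b; exact Finset.sum_map_toList S (sh b)
  have h1 := barrier_list b hb0 hb1 hθ S.toList p f _ hg har (by simpa using hΨ)
  rw [hsum, neg_add_cancel] at h1
  obtain ⟨b', hb', h2⟩ := choose_list b hb0 hb1 0 S.toList S.nodup_toList p f hg h1
  refine ⟨b', hb', fun w hw => ?_⟩
  have h3 := h2 (w + ∑ i ∈ S, sh b' i) (by
    have := add_le_add_left hw (∑ i ∈ S, sh b' i)
    simpa using this)
  rw [LL_eval b' hb', hsum, add_sub_cancel_right] at h3
  exact h3

section matrices

variable {n : Type*} [Fintype n] [DecidableEq n]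

/-- The determinant function `det (δ + diag(x) P)`. -/
noncomputable def G (P : Matrix n n ℂ) (δ : ℝ) (x : n → ℂ) : ℂ :=
  ((δ : ℂ) • (1 : Matrix n n ℂ) + Matrix.diagonal x * P).det

lemma G_cont (P : Matrix n n ℂ) (δ : ℝ) : Continuous (G P δ) := by
  unfold G
  fun_prop

lemma G_aff (P : Matrix n n ℂ) (δ : ℝ) : Aff (G P δ) := by
  have key : ∀ x k t, G P δ (x + Pi.single k t) = G P δ x +
      t * (((δ : ℂ) • (1 : Matrix n n ℂ) + Matrix.diagonal x * P).updateRow k (P k)).det := by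
    intro x k t
    unfold G
    set M := (δ : ℂ) • (1 : Matrix n n ℂ) + Matrix.diagonal x * P with hM
    have e : (δ : ℂ) • (1 : Matrix n n ℂ) + Matrix.diagonal (x + Pi.single k t) * P =
        M.updateRow k (M k + t • P k) := by
      ext i j
      by_cases hi : i = k
      · subst hi
        simp [hM, Matrix.diagonal_mul]; ring
      · simp [hM, Matrix.diagonal_mul, hi]
    rw [e, Matrix.det_updateRow_add, Matrix.det_updateRow_smul, Matrix.updateRow_eq_self]
  intro x k t
  rw [dd, key x k t, key x k 1]
  ring

lemma G_comm (P : Matrix n n ℂ) {δ : ℝ} (hδ : 0 < δ) (x : n → ℂ) :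
    ((δ : ℂ) • (1 : Matrix n n ℂ) + P * Matrix.diagonal x).det = G P δ x := by
  have hδ' : (δ : ℂ) ≠ 0 := by exact_mod_cast hδ.ne'
  have e1 : (δ : ℂ) • (1 : Matrix n n ℂ) + P * Matrix.diagonal x =
      (δ : ℂ) • (1 + ((δ : ℂ)⁻¹ • P) * Matrix.diagonal x) := by
    rw [smul_add, Matrix.smul_mul, smul_smul, mul_inv_cancel₀ hδ', one_smul]
  have e2 : (δ : ℂ) • (1 : Matrix n n ℂ) + Matrix.diagonal x * P =
      (δ : ℂ) • (1 + Matrix.diagonal x * ((δ : ℂ)⁻¹ • P)) := by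
    rw [smul_add, Matrix.mul_smul, smul_smul, mul_inv_cancel₀ hδ', one_smul]
  rw [G, e1, e2, Matrix.det_smul, Matrix.det_smul, Matrix.det_one_add_mul_comm]

lemma G_real (P : Matrix n n ℂ) (hP : Pᴴ = P) {δ : ℝ} (hδ : 0 < δ) (x : n → ℝ) :
    G P δ (fun i => (x i : ℂ)) = ((G P δ (fun i => (x i : ℂ))).re : ℂ) := by
  have h : star (G P δ (fun i => (x i : ℂ))) = G P δ (fun i => (x i : ℂ)) := by
    conv_lhs => rw [G, ← Matrix.det_conjTranspose]
    rw [← G_comm P hδ]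
    congr 1
    rw [Matrix.conjTranspose_add, Matrix.conjTranspose_mul, hP, Matrix.conjTranspose_smul,
      Matrix.diagonal_conjTranspose, Matrix.conjTranspose_one]
    congr 2
    · simp
    · congr 1
      funext i; simp
  exact (Complex.conj_eq_iff_re.mp h).symm

lemma G_ne_zero (P : Matrix n n ℂ) (hP : Pᴴ = P) (hPP : P * P = P) {δ : ℝ} (hδ : 0 < δ)
    (x : n → ℂ)
    (hx : ∀ w : n → ℂ, w ≠ 0 → P *ᵥ w = w →
      ∑ i, ((δ : ℂ) + x i) * (Complex.normSq (w i) : ℂ) ≠ 0) : G P δ x ≠ 0 := by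
  intro h0
  have hδ' : (δ : ℂ) ≠ 0 := by exact_mod_cast hδ.ne'
  rw [← G_comm P hδ] at h0
  obtain ⟨w, hw, hz⟩ := Matrix.exists_mulVec_eq_zero_iff.mpr h0
  rw [Matrix.add_mulVec, Matrix.smul_mulVec, Matrix.one_mulVec, ← Matrix.mulVec_mulVec] at hz
  have hPw : P *ᵥ w = w := by
    have h1 : w = -((δ : ℂ)⁻¹ • (P *ᵥ (Matrix.diagonal x *ᵥ w))) := by
      rw [eq_neg_of_add_eq_zero_right hz, smul_neg, neg_neg, smul_smul, inv_mul_cancel₀ hδ',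
        one_smul]
    rw [h1, Matrix.mulVec_neg, Matrix.mulVec_smul, Matrix.mulVec_mulVec, hPP]
  apply hx w hw hPw
  have h2 := congrArg (fun v => star w ⬝ᵥ v) hz
  simp only [dotProduct_add, dotProduct_zero, dotProduct_smul] at h2
  have h3 : star w ⬝ᵥ (P *ᵥ (Matrix.diagonal x *ᵥ w)) = star w ⬝ᵥ (Matrix.diagonal x *ᵥ w) := by
    rw [Matrix.dotProduct_mulVec]
    congr 1
    have := Matrix.star_mulVec P w
    rw [hP, hPw] at this
    exact this.symm
  rw [h3] at h2
  rw [← h2]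
  simp only [dotProduct, Matrix.mulVec_diagonal, Pi.star_apply, Finset.smul_sum,
    ← Finset.sum_add_distrib]
  refine Finset.sum_congr rfl fun i _ => ?_
  rw [Complex.normSq_eq_conj_mul_self]
  simp only [smul_eq_mul, Complex.star_def]
  ring

lemma sum_normSq_pos (w : n → ℂ) (hw : w ≠ 0) (a : n → ℝ) (ha : ∀ i, 0 < a i) :
    0 < ∑ i, a i * Complex.normSq (w i) := by
  obtain ⟨i, hi⟩ := Function.ne_iff.mp hw
  exact Finset.sum_pos' (fun i _ => mul_nonneg (ha i).le (Complex.normSq_nonneg _))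
    ⟨i, Finset.mem_univ _, mul_pos (ha i) (Complex.normSq_pos.mpr hi)⟩

lemma G_stab (P : Matrix n n ℂ) (hP : Pᴴ = P) (hPP : P * P = P) {δ : ℝ} (hδ : 0 < δ)
    (x : n → ℂ) (hx : ∀ i, 0 < (x i).im) : G P δ x ≠ 0 := by
  apply G_ne_zero P hP hPP hδ
  intro w hw _ h0
  have := congrArg Complex.im h0
  simp at this
  exact (sum_normSq_pos w hw _ hx).ne' this

noncomputable def Gr (P : Matrix n n ℂ) (δ : ℝ) (x : n → ℝ) : ℝ :=
  (G P δ (fun i => (x i : ℂ))).re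

lemma Gr_ne_zero (P : Matrix n n ℂ) (hP : Pᴴ = P) (hPP : P * P = P) {δ : ℝ} (hδ : 0 < δ)
    (x : n → ℝ)
    (hx : ∀ w : n → ℂ, w ≠ 0 → P *ᵥ w = w →
      0 < ∑ i, (δ + x i) * Complex.normSq (w i)) : Gr P δ x ≠ 0 := by
  intro h0
  refine G_ne_zero P hP hPP hδ (fun i => (x i : ℂ)) ?_ ?_
  · intro w hw hPw h
    have := hx w hw hPw
    exact this.ne' (by exact_mod_cast h)
  · rw [G_real P hP hδ]
    exact_mod_cast h0

lemma Gr_pos (P : Matrix n n ℂ) (hP : Pᴴ = P) (hPP : P * P = P) {δ r : ℝ} (hδ : 0 < δ)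
    (hr0 : 0 ≤ r) (hr : r < δ) (x : n → ℝ) (hx : ∀ i, -r ≤ x i) : 0 < Gr P δ x := by
  by_contra hneg
  push Not at hneg
  have hc : Continuous (fun t : ℝ => Gr P δ (fun i => t * x i)) := by
    have := G_cont P δ
    unfold Gr
    fun_prop
  have h0 : 0 ≤ Gr P δ (fun i => (0 : ℝ) * x i) := by
    have : G P δ (fun i => (((0 : ℝ) * x i : ℝ) : ℂ)) = (((δ ^ Fintype.card n : ℝ)) : ℂ) := by
      simp [G]
    rw [Gr, this, Complex.ofReal_re]
    positivity
  have h1 : Gr P δ (fun i => (1 : ℝ) * x i) ≤ 0 := by simpa using hneg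
  obtain ⟨t, ht, hz⟩ := intermediate_value_Icc' (zero_le_one (α := ℝ)) hc.continuousOn ⟨h1, h0⟩
  refine Gr_ne_zero P hP hPP hδ (fun i => t * x i) ?_ hz
  intro w hw _
  apply sum_normSq_pos w hw
  intro i
  have := hx i
  obtain ⟨t0, t1⟩ := ht
  nlinarith

lemma proj_coord (P : Matrix n n ℂ) (hP : Pᴴ = P) (hPP : P * P = P) (w : n → ℂ)
    (hw : P *ᵥ w = w) (i : n) :
    Complex.normSq (w i) ≤ (P i i).re * ∑ j, Complex.normSq (w j) := by
  have h1 : w i = ∑ j, P i j * w j := by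
    conv_lhs => rw [← hw]
    rfl
  have h2 : (P i i).re = ∑ j, ‖P i j‖ ^ 2 := by
    have : P i i = ∑ j, P i j * star (P i j) := by
      conv_lhs => rw [← hPP, Matrix.mul_apply]
      refine Finset.sum_congr rfl fun j _ => ?_
      congr 1
      conv_lhs => rw [← hP]
      rfl
    rw [this, Complex.re_sum]
    refine Finset.sum_congr rfl fun j _ => ?_
    rw [Complex.star_def, Complex.mul_conj, Complex.ofReal_re, Complex.normSq_eq_norm_sq]
  simp only [Complex.normSq_eq_norm_sq]
  rw [h2]
  have h3 : ‖w i‖ ≤ ∑ j, ‖P i j‖ * ‖w j‖ := by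
    rw [h1]
    refine (norm_sum_le _ _).trans (le_of_eq ?_)
    simp
  calc ‖w i‖ ^ 2 ≤ (∑ j, ‖P i j‖ * ‖w j‖) ^ 2 := by gcongr
    _ ≤ _ := Finset.sum_mul_sq_le_sq_mul_sq _ _ _

lemma Gr_aff (P : Matrix n n ℂ) (hP : Pᴴ = P) {δ : ℝ} (hδ : 0 < δ) : Aff (Gr P δ) := by
  intro y k t
  have h1 := G_aff P δ (fun k => (y k : ℂ)) k t
  have h2 := G_real P hP hδ (y + Pi.single k t)
  have h3 := G_real P hP hδ (y + Pi.single k 1)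
  have h4 := G_real P hP hδ y
  rw [cast_add_single] at h2 h3
  simp only [dd, Gr] at *
  rw [cast_add_single, cast_add_single, h1]
  rw [Complex.ofReal_one] at h3 ⊢
  rw [h3, h4]
  simp

lemma Gr_ratio (P : Matrix n n ℂ) (hP : Pᴴ = P) (hPP : P * P = P) {δ r ε : ℝ} (hδ : 0 < δ)
    (hr0 : 0 ≤ r) (hr : r < δ) (hε : 0 < ε) (x : n → ℝ) (hx : ∀ i, -r ≤ x i) (i : n)
    (hi : (P i i).re ≤ ε) : dd (Gr P δ) i x / Gr P δ x ≤ ε / (δ - r) := by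
  have hg := Gr_pos P hP hPP hδ hr0 hr x hx
  have hdr : 0 < δ - r := by linarith
  rw [div_le_div_iff₀ hg hdr]
  by_contra hcon
  push Not at hcon
  set D := dd (Gr P δ) i x
  have hD : 0 < D := by
    by_contra h; push Not at h
    nlinarith [mul_pos hε hg]
  set t := Gr P δ x / D with ht
  have ht0 : 0 < t := div_pos hg hD
  have htlt : t * ε < δ - r := by
    rw [ht, div_mul_eq_mul_div, div_lt_iff₀ hD]; linarith
  have hz : Gr P δ (x + Pi.single i (-t)) = 0 := by
    rw [Gr_aff P hP hδ]
    change Gr P δ x + -t * D = 0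
    rw [ht]; field_simp; ring
  refine Gr_ne_zero P hP hPP hδ _ ?_ hz
  intro w hw hPw
  have hN : 0 < ∑ j, Complex.normSq (w j) := by
    simpa using sum_normSq_pos w hw (fun _ => 1) (fun _ => one_pos)
  have h1 := proj_coord P hP hPP w hPw i
  have h2 : Complex.normSq (w i) ≤ ε * ∑ j, Complex.normSq (w j) :=
    h1.trans (mul_le_mul_of_nonneg_right hi hN.le)
  have h3 : ∑ j, (δ + (x + Pi.single i (-t) : n → ℝ) j) * Complex.normSq (w j) =
      ∑ j, (δ + x j) * Complex.normSq (w j) - t * Complex.normSq (w i) := by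
    have : ∀ j, (δ + (x + Pi.single i (-t) : n → ℝ) j) * Complex.normSq (w j) =
        (δ + x j) * Complex.normSq (w j) + (if j = i then -t * Complex.normSq (w j) else 0) := by
      intro j
      by_cases hj : j = i
      · subst hj; simp; ring
      · simp [hj]
    simp only [this, Finset.sum_add_distrib]
    simp
    ring
  rw [h3]
  have h4 : (δ - r) * ∑ j, Complex.normSq (w j) ≤ ∑ j, (δ + x j) * Complex.normSq (w j) := by
    rw [Finset.mul_sum]
    refine Finset.sum_le_sum fun j _ => mul_le_mul_of_nonneg_right ?_ (Complex.normSq_nonneg _)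
    linarith [hx j]
  have h5 := mul_le_mul_of_nonneg_left h2 ht0.le
  have h6 := mul_pos (sub_pos.mpr htlt) hN
  nlinarith

/-- The two-block polynomial. -/
noncomputable def p0 (P : Matrix n n ℂ) (δ : ℝ) (c : n × Bool → ℝ) (z : n × Bool → ℂ) : ℂ :=
  G P δ (fun i => (c (i, true) : ℂ) + z (i, true)) *
    G P δ (fun i => (c (i, false) : ℂ) + z (i, false))

/-- Its real version. -/
noncomputable def f0 (P : Matrix n n ℂ) (δ : ℝ) (c : n × Bool → ℝ) (z : n × Bool → ℝ) : ℝ :=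
  Gr P δ (fun i => c (i, true) + z (i, true)) *
    Gr P δ (fun i => c (i, false) + z (i, false))

lemma sec_single {K : Type*} [Ring K] (c z : n × Bool → K) (i : n) (s s' : Bool) (t : K) :
    (fun j => c (j, s) + (z + Pi.single (i, s') t : n × Bool → K) (j, s)) =
      (fun j => c (j, s) + z (j, s)) + (if s = s' then Pi.single i t else 0) := by
  funext j
  by_cases hs : s = s'
  · subst hs
    by_cases hj : j = i
    · subst hj; simp; abel
    · simp [hj]
  · simp [hs]

lemma dd_f0_true (P : Matrix n n ℂ) (δ : ℝ) (c : n × Bool → ℝ) (z : n × Bool → ℝ) (i : n) :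
    dd (f0 P δ c) (i, true) z = dd (Gr P δ) i (fun i => c (i, true) + z (i, true)) *
      Gr P δ (fun i => c (i, false) + z (i, false)) := by
  simp only [dd, f0]
  rw [sec_single c z, sec_single c z]
  simp
  ring

lemma dd_f0_false (P : Matrix n n ℂ) (δ : ℝ) (c : n × Bool → ℝ) (z : n × Bool → ℝ) (i : n) :
    dd (f0 P δ c) (i, false) z = Gr P δ (fun i => c (i, true) + z (i, true)) *
      dd (Gr P δ) i (fun i => c (i, false) + z (i, false)) := by
  simp only [dd, f0]
  rw [sec_single c z, sec_single c z]
  simp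
  ring

lemma good0 (P : Matrix n n ℂ) (hP : Pᴴ = P) (hPP : P * P = P) {δ : ℝ} (hδ : 0 < δ)
    (c : n × Bool → ℝ) (hc : ∀ k, 0 ≤ c k) : Good (p0 P δ c) (f0 P δ c) where
  cont := by
    have := G_cont P δ
    unfold p0
    fun_prop
  link := by
    intro y
    have h1 := G_real P hP hδ (fun i => c (i, true) + y (i, true))
    have h2 := G_real P hP hδ (fun i => c (i, false) + y (i, false))
    simp only [p0, f0, Gr]
    push_cast at *
    rw [← h1, ← h2]
  aff := by
    rintro z ⟨i, s⟩ t
    simp only [dd, p0]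
    rw [sec_single (fun k => (c k : ℂ)) z, sec_single (fun k => (c k : ℂ)) z,
      sec_single (fun k => (c k : ℂ)) z, sec_single (fun k => (c k : ℂ)) z]
    cases s
    · have := G_aff P δ (fun i => (c (i, false) : ℂ) + z (i, false)) i t
      simp only [dd] at this
      simp [this]; ring
    · have := G_aff P δ (fun i => (c (i, true) : ℂ) + z (i, true)) i t
      simp only [dd] at this
      simp [this]; ring
  stab := by
    intro z hz
    refine mul_ne_zero ?_ ?_ <;> apply G_stab P hP hPP hδ <;> intro i <;> simpa using hz _
  evpos := by
    refine ⟨0, fun y hy => mul_pos ?_ ?_⟩ <;>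
    · apply Gr_pos P hP hPP hδ le_rfl hδ
      intro i
      have := hc (i, true)
      have := hc (i, false)
      have := hy (i, true)
      have := hy (i, false)
      linarith

lemma sum_sh (b : n → ℝ) (S : Finset n) (i : n) :
    (∑ j ∈ S, sh b j) (i, true) = (if i ∈ S then b i else 0) ∧
    (∑ j ∈ S, sh b j) (i, false) = (if i ∈ S then 1 - b i else 0) := by
  constructor <;>
  · rw [Finset.sum_apply]
    simp [sh, Pi.single_apply]

/-- Existence of the subset, in terms of nonvanishing of determinants. -/
theorem exists_subset (P : Matrix n n ℂ) (hP : Pᴴ = P) (hPP : P * P = P) {ε : ℝ} (hε : 0 < ε)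
    (S : Finset n) (hS : ∀ i ∈ S, (P i i).re ≤ ε) (b : n → ℝ) (hb0 : ∀ i, 0 ≤ b i)
    (hb1 : ∀ i, b i ≤ 1) (hbS : ∀ i ∉ S, b i = 0) :
    ∃ S' ⊆ S, ∀ s : n → ℝ, (∀ i, 0 ≤ s i) →
      Gr P (2 * √ε + ε) (fun i => b i - (if i ∈ S' then 1 else 0) + s i) ≠ 0 ∧
      Gr P (2 * √ε + ε) (fun i => -(b i - (if i ∈ S' then 1 else 0)) + s i) ≠ 0 := by
  set r := √ε with hr
  have hr0 : 0 < r := Real.sqrt_pos.mpr hε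
  have hrr : r ^ 2 = ε := Real.sq_sqrt hε.le
  set δ := 2 * r + ε with hδdef
  have hδ : 0 < δ := by positivity
  have hrδ : r < δ := by linarith
  set c : n × Bool → ℝ := fun k => if k.2 then b k.1 else (if k.1 ∈ S then 1 else 0) - b k.1 with hc
  have hc0 : ∀ k, 0 ≤ c k := by
    rintro ⟨i, s⟩
    by_cases hi : i ∈ S
    · cases s <;> simp [hc, hi, hb0, hb1]
    · cases s <;> simp [hc, hi, hbS]
  have hc1 : ∀ k, c k ≤ 1 := by
    rintro ⟨i, s⟩
    by_cases hi : i ∈ S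
    · cases s <;> simp [hc, hi, hb0, hb1]
    · cases s <;> simp [hc, hi, hbS]
  have hg := good0 P hP hPP hδ c hc0
  set θ := 1 + r with hθdef
  have hθ : 0 < θ := by positivity
  set y0 := -(θ • ∑ i ∈ S, sh b i) with hy0
  have hcy : ∀ k, c k + y0 k = -(r * c k) := by
    rintro ⟨i, s⟩
    by_cases hi : i ∈ S
    · cases s <;> simp [hc, hy0, (sum_sh b S i).1, (sum_sh b S i).2, hi, hθdef] <;> ring
    · cases s <;> simp [hc, hy0, (sum_sh b S i).1, (sum_sh b S i).2, hi, hθdef, hbS]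
  have hge : ∀ k, -r ≤ c k + y0 k := by
    intro k
    rw [hcy]
    have := hc1 k
    nlinarith
  have har : AR (f0 P δ c) y0 := by
    intro w hw
    refine mul_pos ?_ ?_ <;>
    · apply Gr_pos P hP hPP hδ hr0.le hrδ
      intro i
      have h1 := hge (i, true)
      have h2 := hge (i, false)
      have h3 := hw (i, true)
      have h4 := hw (i, false)
      linarith
  have hK : ε / (δ - r) = 1 - 1 / θ := by
    have : δ - r = r * θ := by rw [hδdef, hθdef, ← hrr]; ring
    rw [this, ← hrr, hθdef]
    field_simp
    ring
  have hΨ : ∀ i ∈ S, b i * (dd (f0 P δ c) (i, true) y0 / f0 P δ c y0)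
      + (1 - b i) * (dd (f0 P δ c) (i, false) y0 / f0 P δ c y0) ≤ 1 - 1 / θ := by
    intro i hi
    have g1 := Gr_pos P hP hPP hδ hr0.le hrδ (fun i => c (i, true) + y0 (i, true))
      (fun i => hge _)
    have g2 := Gr_pos P hP hPP hδ hr0.le hrδ (fun i => c (i, false) + y0 (i, false))
      (fun i => hge _)
    have q1 := Gr_ratio P hP hPP hδ hr0.le hrδ hε (fun i => c (i, true) + y0 (i, true))
      (fun i => hge _) i (hS i hi)
    have q2 := Gr_ratio P hP hPP hδ hr0.le hrδ hε (fun i => c (i, false) + y0 (i, false))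
      (fun i => hge _) i (hS i hi)
    rw [dd_f0_true, dd_f0_false, f0, mul_div_mul_right _ _ g2.ne', mul_div_mul_left _ _ g1.ne']
    rw [hK] at q1 q2
    have m1 := mul_le_mul_of_nonneg_left q1 (hb0 i)
    have m2 := mul_le_mul_of_nonneg_left q2 (sub_nonneg.mpr (hb1 i))
    linarith
  obtain ⟨b', hb', hAR⟩ := abstract_main b hb0 hb1 hθ S _ _ hg har hΨ
  refine ⟨S.filter (fun i => b' i = 1), Finset.filter_subset _ _, ?_⟩
  have hkey : ∀ s s' : n → ℝ, (∀ i, 0 ≤ s i) → (∀ i, 0 ≤ s' i) →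
      Gr P δ (fun i => b i - (if i ∈ S.filter (fun i => b' i = 1) then 1 else 0) + s i) *
      Gr P δ (fun i => -(b i - (if i ∈ S.filter (fun i => b' i = 1) then 1 else 0)) + s' i) ≠ 0 := by
    intro s s' hs hs'
    have := hAR (-(∑ i ∈ S, sh b' i) + fun k => if k.2 then s k.1 else s' k.1) (by
      rw [le_add_iff_nonneg_right]
      rintro ⟨i, t⟩
      cases t
      · simpa using hs' i
      · simpa using hs i)
    refine ne_of_gt (lt_of_lt_of_eq this ?_)
    rw [f0]
    congr 2
    · funext i
      simp only [Pi.add_apply, Pi.neg_apply, (sum_sh b' S i).1, hc]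
      by_cases hi : i ∈ S
      · rcases hb' i with h | h <;> simp [h, hi]; ring
      · simp [hi]
    · funext i
      simp only [Pi.add_apply, Pi.neg_apply, (sum_sh b' S i).2, hc]
      by_cases hi : i ∈ S
      · rcases hb' i with h | h <;> simp [h, hi]; ring
      · simp [hi]
  intro s hs
  exact ⟨left_ne_zero_of_mul (hkey s 0 hs (fun _ => le_rfl)),
    right_ne_zero_of_mul (hkey 0 s (fun _ => le_rfl) hs)⟩

/-- Nonvanishing above `x` bounds the eigenvalues of `P diag(x) P` below. -/
lemma eig_bound (P : Matrix n n ℂ) (hPP : P * P = P) {δ : ℝ} (hδ : 0 < δ)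
    (x : n → ℝ) (hx : ∀ s : n → ℝ, (∀ i, 0 ≤ s i) → Gr P δ (fun i => x i + s i) ≠ 0)
    (l : ℝ) (w : n → ℂ) (hw : w ≠ 0)
    (h : (P * Matrix.diagonal (fun i => (x i : ℂ)) * P) *ᵥ w = (l : ℂ) • w) : -δ ≤ l := by
  by_contra hcon
  push Not at hcon
  have hl : (l : ℂ) ≠ 0 := by
    have : l ≠ 0 := by linarith
    exact_mod_cast this
  have hPw : P *ᵥ w = w := by
    have e : w = (l : ℂ)⁻¹ • ((P * Matrix.diagonal (fun i => (x i : ℂ)) * P) *ᵥ w) := by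
      rw [h, smul_smul, inv_mul_cancel₀ hl, one_smul]
    rw [e, Matrix.mulVec_smul, Matrix.mulVec_mulVec, ← mul_assoc, ← mul_assoc, hPP]
  apply hx (fun _ => -l - δ) (fun _ => by linarith)
  have hG : G P δ (fun i => ((x i + (-l - δ) : ℝ) : ℂ)) = 0 := by
    rw [← G_comm P hδ]
    apply Matrix.exists_mulVec_eq_zero_iff.mp
    refine ⟨w, hw, ?_⟩
    rw [Matrix.add_mulVec, Matrix.smul_mulVec, Matrix.one_mulVec, ← Matrix.mulVec_mulVec]
    have e1 : Matrix.diagonal (fun i => ((x i + (-l - δ) : ℝ) : ℂ)) *ᵥ w =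
        Matrix.diagonal (fun i => (x i : ℂ)) *ᵥ w + ((-l - δ : ℝ) : ℂ) • w := by
      funext i
      simp [Matrix.mulVec_diagonal]
      ring
    rw [← Matrix.mulVec_mulVec, hPw, ← Matrix.mulVec_mulVec] at h
    rw [e1, Matrix.mulVec_add, Matrix.mulVec_smul, hPw, h, ← add_smul, ← add_smul]
    have : (δ : ℂ) + ((l : ℂ) + ((-l - δ : ℝ) : ℂ)) = 0 := by push_cast; ring
    rw [this, zero_smul]
  rw [Gr, hG]; rfl

end matrices

lemma opNorm_le {m : ℕ} (A : Matrix (Fin m) (Fin m) ℂ) (hA : Aᴴ = A) {δ : ℝ} (hδ : 0 ≤ δ)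
    (h : ∀ (l : ℝ) (w : Fin m → ℂ), w ≠ 0 → A *ᵥ w = (l : ℂ) • w → |l| ≤ δ) :
    opNorm A ≤ δ := by
  have hsa : IsSelfAdjoint (Matrix.toEuclideanCLM (𝕜 := ℂ) A) := by
    have : IsSelfAdjoint A := hA
    exact this.map (Matrix.toEuclideanCLM (𝕜 := ℂ) (n := Fin m))
  have h1 := hsa.spectralRadius_eq_nnnorm
  have h2 : spectralRadius ℂ (Matrix.toEuclideanCLM (𝕜 := ℂ) A) ≤ ENNReal.ofReal δ := by
    unfold spectralRadius
    refine iSup₂_le fun k hk => ?_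
    have hre := hsa.mem_spectrum_eq_re hk
    have hk' : k ∈ spectrum ℂ A := by
      have := AlgEquiv.spectrum_eq (Matrix.toEuclideanCLM (𝕜 := ℂ) (n := Fin m)) A
      rwa [this] at hk
    rw [spectrum.mem_iff, Matrix.isUnit_iff_isUnit_det, isUnit_iff_ne_zero, not_not] at hk'
    obtain ⟨w, hw, hz⟩ := Matrix.exists_mulVec_eq_zero_iff.mpr hk'
    rw [Matrix.sub_mulVec, sub_eq_zero, Algebra.algebraMap_eq_smul_one, Matrix.smul_mulVec,
      Matrix.one_mulVec, hre] at hz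
    have hb := h k.re w hw hz.symm
    have hn : ‖k‖ ≤ δ := by
      rw [hre, Complex.norm_real]; exact hb
    rw [← ENNReal.ofReal_coe_nnreal, coe_nnnorm]
    exact ENNReal.ofReal_le_ofReal hn
  rw [h1] at h2
  rw [opNorm]
  rw [← ENNReal.ofReal_coe_nnreal, coe_nnnorm] at h2
  exact (ENNReal.ofReal_le_ofReal_iff hδ).mp h2

end KS


namespace KS

lemma diag_re {m : ℕ} (P : Matrix (Fin m) (Fin m) ℂ) (hP : Pᴴ = P) (hPP : P * P = P)
    (i : Fin m) : (P i i).re = ∑ j, ‖P i j‖ ^ 2 := by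
  have : P i i = ∑ j, P i j * star (P i j) := by
    conv_lhs => rw [← hPP, Matrix.mul_apply]
    refine Finset.sum_congr rfl fun j _ => ?_
    congr 1
    conv_lhs => rw [← hP]
    rfl
  rw [this, Complex.re_sum]
  refine Finset.sum_congr rfl fun j _ => ?_
  rw [Complex.star_def, Complex.mul_conj, Complex.ofReal_re, Complex.normSq_eq_norm_sq]

lemma diag_re_le_one {m : ℕ} (P : Matrix (Fin m) (Fin m) ℂ) (hP : Pᴴ = P) (hPP : P * P = P)
    (i : Fin m) : (P i i).re ≤ 1 := by
  have h := diag_re P hP hPP i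
  have h1 : ‖P i i‖ ^ 2 ≤ ∑ j, ‖P i j‖ ^ 2 :=
    Finset.single_le_sum (f := fun j => ‖P i j‖ ^ 2) (fun j _ => sq_nonneg _) (Finset.mem_univ i)
  have h2 : (P i i).re ≤ ‖P i i‖ := Complex.re_le_norm _
  have h3 := norm_nonneg (P i i)
  nlinarith

lemma main_pos {m : ℕ} {ε : ℝ} (hε : 0 < ε) (P : Matrix (Fin m) (Fin m) ℂ)
    (hP : Pᴴ = P) (hPP : P * P = P) (S : Finset (Fin m)) (hS : ∀ i ∈ S, (P i i).re ≤ ε)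
    (b : Fin m → ℝ) (hb0 : ∀ i, 0 ≤ b i) (hb1 : ∀ i, b i ≤ 1) (hbS : ∀ i ∉ S, b i = 0) :
    ∃ S' : Finset (Fin m), S' ⊆ S ∧
      opNorm (P * diagProj S' * P - P * Matrix.diagonal (fun i => (b i : ℂ)) * P)
        ≤ 2 * Real.sqrt ε + ε := by
  obtain ⟨S', hS', H⟩ := exists_subset P hP hPP hε S hS b hb0 hb1 hbS
  refine ⟨S', hS', ?_⟩
  have hδ : 0 < 2 * Real.sqrt ε + ε := by positivity
  set x : Fin m → ℝ := fun i => b i - (if i ∈ S' then 1 else 0) with hx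
  have hA : P * diagProj S' * P - P * Matrix.diagonal (fun i => (b i : ℂ)) * P
      = P * Matrix.diagonal (fun i => ((-x i : ℝ) : ℂ)) * P := by
    rw [← Matrix.sub_mul, ← Matrix.mul_sub, diagProj, Matrix.diagonal_sub]
    congr 3
    funext i
    simp only [hx]
    split_ifs <;> push_cast <;> ring
  rw [hA]
  refine opNorm_le _ ?_ hδ.le ?_
  · rw [Matrix.conjTranspose_mul, Matrix.conjTranspose_mul, hP, Matrix.diagonal_conjTranspose,
      Matrix.mul_assoc]
    congr 3
    funext i
    simp
  · intro l w hw hl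
    rw [abs_le]
    constructor
    · exact eig_bound P hPP hδ (fun i => -x i) (fun s hs => (H s hs).2) l w hw hl
    · have h2 : (P * Matrix.diagonal (fun i => (x i : ℂ)) * P) *ᵥ w = ((-l : ℝ) : ℂ) • w := by
        have : Matrix.diagonal (fun i => (x i : ℂ))
            = - Matrix.diagonal (fun i => ((-x i : ℝ) : ℂ)) := by
          rw [Matrix.diagonal_neg]
          congr 1
          funext i
          simp
        rw [this, Matrix.mul_neg, Matrix.neg_mul, Matrix.neg_mulVec, hl]
        simp
      have := eig_bound P hPP hδ x (fun s hs => (H s hs).1) (-l) w hw h2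
      linarith

lemma main_nonpos {m : ℕ} {ε : ℝ} (hε : ε ≤ 0) (P : Matrix (Fin m) (Fin m) ℂ)
    (hP : Pᴴ = P) (hPP : P * P = P) (S : Finset (Fin m)) (hS : ∀ i ∈ S, (P i i).re ≤ ε)
    (b : Fin m → ℝ) (hbS : ∀ i ∉ S, b i = 0) :
    opNorm (P * diagProj ∅ * P - P * Matrix.diagonal (fun i => (b i : ℂ)) * P) = 0 := by
  have hz : Matrix.diagonal (fun i => (b i : ℂ)) * P = 0 := by
    ext i j
    rw [Matrix.diagonal_mul]
    by_cases hi : i ∈ S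
    · have h := diag_re P hP hPP i
      have h1 : ‖P i j‖ ^ 2 ≤ ∑ j, ‖P i j‖ ^ 2 :=
        Finset.single_le_sum (f := fun j => ‖P i j‖ ^ 2) (fun j _ => sq_nonneg _)
          (Finset.mem_univ j)
      have h2 : ‖P i j‖ ^ 2 = 0 := le_antisymm (by linarith [hS i hi]) (sq_nonneg _)
      have h3 : P i j = 0 := by simpa using h2
      simp [h3]
    · simp [hbS i hi]
  have h0 : diagProj (∅ : Finset (Fin m)) = 0 := by
    simp [diagProj]
  rw [Matrix.mul_assoc P (Matrix.diagonal _), hz, h0]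
  simp [opNorm]

end KS

/-- There is a universal constant `C > 0` such that the following holds: if
`P ∈ M_m(ℂ)` is a projection matrix, `Q` is the diagonal projection with support
`S ⊆ {1, …, m}`, `B` is a diagonal matrix with `0 ≤ B ≤ Q` (its diagonal entries `b i`
lie in `[0,1]` and vanish off `S`), and the diagonal entries of `QPQ` are each at most
`ε` (i.e. `P i i ≤ ε` for `i ∈ S`), then there is a diagonal projection `Q' ≤ Q`
(i.e. with support `S' ⊆ S`) such that `‖PQ'P − PBP‖ ≤ C ε^(1/8)`. -/
theorem stmt12 :
    ∃ C : ℝ, 0 < C ∧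
      ∀ (m : ℕ) (ε : ℝ) (P : Matrix (Fin m) (Fin m) ℂ),
        Pᴴ = P → P * P = P →
        ∀ S : Finset (Fin m),
          (∀ i ∈ S, (P i i).re ≤ ε) →
          ∀ b : Fin m → ℝ,
            (∀ i, 0 ≤ b i) → (∀ i, b i ≤ 1) → (∀ i ∉ S, b i = 0) →
            ∃ S' : Finset (Fin m), S' ⊆ S ∧
              opNorm (P * diagProj S' * P
                  - P * Matrix.diagonal (fun i => (b i : ℂ)) * P)
                ≤ C * ε ^ ((1 : ℝ) / 8) := by
  refine ⟨3, by norm_num, ?_⟩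
  intro m ε P hP hPP S hS b hb0 hb1 hbS
  rcases le_or_gt ε 0 with hε | hε
  · refine ⟨∅, Finset.empty_subset _, ?_⟩
    rw [KS.main_nonpos hε P hP hPP S hS b hbS]
    rcases hε.eq_or_lt with h | h
    · rw [h]
      positivity
    · rw [Real.rpow_def_of_neg h]
      have hc : 0 ≤ Real.cos (1 / 8 * Real.pi) :=
        Real.cos_nonneg_of_neg_pi_div_two_le_of_le
          (by linarith [Real.pi_pos]) (by linarith [Real.pi_pos])
      have := (Real.exp_pos (Real.log ε * (1 / 8))).le
      positivity
  · have hε1 : 0 < min ε 1 := lt_min hε one_pos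
    obtain ⟨S', hS', h⟩ := KS.main_pos hε1 P hP hPP S
      (fun i hi => le_min (hS i hi) (KS.diag_re_le_one P hP hPP i)) b hb0 hb1 hbS
    refine ⟨S', hS', h.trans ?_⟩
    have hle : min ε 1 ≤ 1 := min_le_right _ _
    have h1 : Real.sqrt (min ε 1) ≤ (min ε 1) ^ ((1 : ℝ) / 8) := by
      rw [Real.sqrt_eq_rpow]
      exact Real.rpow_le_rpow_of_exponent_ge hε1 hle (by norm_num)
    have h2 : min ε 1 ≤ (min ε 1) ^ ((1 : ℝ) / 8) := by
      conv_lhs => rw [← Real.rpow_one (min ε 1)]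
      exact Real.rpow_le_rpow_of_exponent_ge hε1 hle (by norm_num)
    have h3 : (min ε 1) ^ ((1 : ℝ) / 8) ≤ ε ^ ((1 : ℝ) / 8) :=
      Real.rpow_le_rpow hε1.le (min_le_left _ _) (by norm_num)
    linarith
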